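/- arXiv:2103.03868 — 7 statements merged into one kernel-verified Lean document; each statement's English description precedes it below -/
import Mathlib

section
/- Let V be a finite set with |V| = n, and let F : 2^V → ℝ be a nonnegative submodular set function with F(∅) = F(V) = 0. For each ordered pair u, v ∈ V with u ≠ v define the capacity c_{uv} = min { F(A) : A ⊆ V, u ∈ A, v ∉ A }, and define the cut function c⁺(A) = Σ_{u ∈ A, v ∉ A} c_{uv}. Then for every A ⊆ V, (4/n²) · c⁺(A) ≤ F(A) ≤ c⁺(A). -/
/-!
The lower bound holds because `A` itself competes in the minimum defining each `c u v` with
`u ∈ A`, `v ∉ A`, so `c⁺(A) ≤ |A| |V \ A| F(A) ≤ (n² / 4) F(A)`.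

For the upper bound, pick minimisers `S u v` with `F (S u v) = c u v`. Then
`A = ⋃_{u ∈ A} ⋂_{v ∉ A} S u v`, and a nonnegative submodular function vanishing at `∅` and `V`
is subadditive under finite unions and finite intersections (`Submodular.sup_le_sum`,
`Submodular.inf_le_sum`).
-/

/-- A set function `F` on the subsets of a finite ground set is *submodular* if
`F (A ∪ B) + F (A ∩ B) ≤ F A + F B` for all `A, B`. -/
def Submodular {V : Type*} [DecidableEq V] (F : Finset V → ℝ) : Prop :=
  ∀ A B : Finset V, F (A ∪ B) + F (A ∩ B) ≤ F A + F B

/-- The cut value of a set `S` for capacities `c`: `c⁺(S) = Σ_{u ∈ S, v ∉ S} c u v`. -/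
def cutVal {V : Type*} [Fintype V] [DecidableEq V] (c : V → V → ℝ) (S : Finset V) : ℝ :=
  ∑ u ∈ S, ∑ v ∈ Sᶜ, c u v

theorem Submodular.sup_le_sum {V ι : Type*} [DecidableEq V] {F : Finset V → ℝ}
    (hsub : Submodular F) (hnonneg : ∀ A, 0 ≤ F A) (h0 : F ∅ = 0)
    (s : Finset ι) (B : ι → Finset V) : F (s.sup B) ≤ ∑ i ∈ s, F (B i) := by
  classical
  induction s using Finset.induction_on with
  | empty => simp [h0]
  | insert a s ha ih =>
    rw [Finset.sup_insert, Finset.sum_insert ha, Finset.sup_eq_union]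
    linarith [hsub (B a) (s.sup B), hnonneg (B a ∩ s.sup B)]

theorem Submodular.inf_le_sum {V ι : Type*} [DecidableEq V] [Fintype V] {F : Finset V → ℝ}
    (hsub : Submodular F) (hnonneg : ∀ A, 0 ≤ F A) (hV : F Finset.univ = 0)
    (s : Finset ι) (B : ι → Finset V) : F (s.inf B) ≤ ∑ i ∈ s, F (B i) := by
  classical
  induction s using Finset.induction_on with
  | empty => simp [hV]
  | insert a s ha ih =>
    rw [Finset.inf_insert, Finset.sum_insert ha, Finset.inf_eq_inter]
    linarith [hsub (B a) (s.inf B), hnonneg (B a ∪ s.inf B)]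

/-- Let `F` be a nonnegative submodular function with `F ∅ = F V = 0` on a ground set of
size `n`.  With capacities `c u v = min { F A : u ∈ A, v ∉ A }` for `u ≠ v`, the resulting
cut function `c⁺` satisfies `(4/n²) c⁺(A) ≤ F(A) ≤ c⁺(A)` for every `A ⊆ V`. -/
theorem stmt1 {V : Type*} [DecidableEq V] [Fintype V]
    (n : ℕ) (hn : Fintype.card V = n)
    (F : Finset V → ℝ) (hsub : Submodular F) (hnonneg : ∀ A : Finset V, 0 ≤ F A)
    (h0 : F ∅ = 0) (hV : F Finset.univ = 0)
    (c : V → V → ℝ)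
    (hc : ∀ u v : V, u ≠ v →
      IsLeast {x : ℝ | ∃ A : Finset V, u ∈ A ∧ v ∉ A ∧ F A = x} (c u v)) :
    ∀ A : Finset V, (4 / (n : ℝ) ^ 2) * cutVal c A ≤ F A ∧ F A ≤ cutVal c A := by
  intro A
  have hne : ∀ u ∈ A, ∀ v ∈ Aᶜ, u ≠ v := by
    rintro u hu v hv rfl
    exact Finset.mem_compl.1 hv hu
  constructor
  · have hcut : cutVal c A ≤ (A.card : ℝ) * (Aᶜ.card : ℝ) * F A := by
      calc cutVal c A ≤ ∑ u ∈ A, ∑ v ∈ Aᶜ, F A :=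
            Finset.sum_le_sum fun u hu => Finset.sum_le_sum fun v hv =>
              (hc u v (hne u hu v hv)).2 ⟨A, hu, Finset.mem_compl.1 hv, rfl⟩
        _ = (A.card : ℝ) * (Aᶜ.card : ℝ) * F A := by
            simp only [Finset.sum_const, nsmul_eq_mul, mul_assoc]
    have hcard : (A.card : ℝ) + (Aᶜ.card : ℝ) = n := by
      rw [← hn]
      exact_mod_cast Finset.card_add_card_compl A
    have hmul : 4 * ((A.card : ℝ) * (Aᶜ.card : ℝ)) ≤ (n : ℝ) ^ 2 := by
      rw [← hcard]
      nlinarith [sq_nonneg ((A.card : ℝ) - (Aᶜ.card : ℝ))]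
    -- For `n = 0` the factor `4 / n ^ 2` is zero by convention.
    rcases Nat.eq_zero_or_pos n with hn0 | hnpos
    · simpa [hn0] using hnonneg A
    · have hn2 : (0 : ℝ) < (n : ℝ) ^ 2 := by positivity
      rw [div_mul_eq_mul_div, div_le_iff₀ hn2]
      nlinarith [mul_le_mul_of_nonneg_right hmul (hnonneg A)]
  · have hex : ∀ u v : V, ∃ S : Finset V, u ≠ v → u ∈ S ∧ v ∉ S ∧ F S = c u v := by
      intro u v
      by_cases h : u = v
      · exact ⟨∅, fun h' => absurd h h'⟩
      · obtain ⟨S, hS⟩ := (hc u v h).1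
        exact ⟨S, fun _ => hS⟩
    choose S hS using hex
    have hA : A = A.sup fun u => Aᶜ.inf (S u) := by
      ext x
      simp only [Finset.mem_sup, Finset.mem_inf]
      constructor
      · exact fun hx => ⟨x, hx, fun v hv => (hS x v (hne x hx v hv)).1⟩
      · rintro ⟨u, hu, h⟩
        by_contra hx
        have hx' := Finset.mem_compl.2 hx
        exact (hS u x (hne u hu x hx')).2.1 (h x hx')
    calc F A = F (A.sup fun u => Aᶜ.inf (S u)) := congrArg F hA
      _ ≤ ∑ u ∈ A, F (Aᶜ.inf (S u)) := hsub.sup_le_sum hnonneg h0 A _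
      _ ≤ ∑ u ∈ A, ∑ v ∈ Aᶜ, F (S u v) :=
          Finset.sum_le_sum fun u _ => hsub.inf_le_sum hnonneg hV Aᶜ (S u)
      _ = cutVal c A :=
          Finset.sum_congr rfl fun u hu => Finset.sum_congr rfl fun v hv =>
            (hS u v (hne u hu v hv)).2.2
end

section
/- Let V be a finite set, let V_1, …, V_r ⊆ V, and for each i let F_i : 2^V → ℝ be a nonnegative submodular set function that is V_i-restricted (i.e., F_i(A) = F_i(A ∩ V_i) for all A ⊆ V) with F_i(∅) = F_i(V_i) = 0. For each ordered pair u ≠ v in V define c_{uv} = Σ_{i : u, v ∈ V_i} min { F_i(A) : A ⊆ V_i, u ∈ A, v ∉ A }, and let c⁺(A) = Σ_{u ∈ A, v ∉ A} c_{uv}. Then for every A ⊆ V, (4/M²) · c⁺(A) ≤ Σ_{i=1}^r F_i(A) ≤ c⁺(A), where M = max_{1 ≤ i ≤ r} |V_i|. -/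
/-- Intersecting separating sets: if each `v ∈ t` is separated from `u` by a set of value `g v`, then
all of `t` is separated from `u` by a set of value at most `∑ v ∈ t, g v`. -/
lemma exists_inter_le {V : Type*} [DecidableEq V] {F : Finset V → ℝ} (hF : Submodular F)
    (hn : ∀ A, 0 ≤ F A) {W : Finset V} (hW : F W = 0) {u : V} (hu : u ∈ W) (g : V → ℝ)
    (t : Finset V)
    (hg : ∀ v ∈ t, ∃ S : Finset V, S ⊆ W ∧ u ∈ S ∧ v ∉ S ∧ F S = g v) :
    ∃ T : Finset V, T ⊆ W ∧ u ∈ T ∧ (∀ v ∈ t, v ∉ T) ∧ F T ≤ ∑ v ∈ t, g v := by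
  induction t using Finset.induction_on with
  | empty => exact ⟨W, subset_rfl, hu, by simp, by simp [hW]⟩
  | insert a t ha ih =>
    obtain ⟨T, hTW, huT, hT, hle⟩ := ih fun v hv => hg v (Finset.mem_insert_of_mem hv)
    obtain ⟨S, -, huS, haS, hS⟩ := hg a (Finset.mem_insert_self a t)
    refine ⟨S ∩ T, Finset.inter_subset_right.trans hTW, Finset.mem_inter.2 ⟨huS, huT⟩, ?_, ?_⟩
    · intro v hv hvT
      rw [Finset.mem_inter] at hvT
      rcases Finset.mem_insert.1 hv with rfl | hv
      · exact haS hvT.1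
      · exact hT v hv hvT.2
    · rw [Finset.sum_insert ha]
      linarith [hF S T, hn (S ∪ T)]

/-- Uniting sets that lie inside `B` and contain the single elements of `s`. -/
lemma exists_union_le {V : Type*} [DecidableEq V] {F : Finset V → ℝ} (hF : Submodular F)
    (hn : ∀ A, 0 ≤ F A) (h0 : F ∅ = 0) {B : Finset V} (g : V → ℝ) (s : Finset V)
    (hg : ∀ u ∈ s, ∃ S : Finset V, S ⊆ B ∧ u ∈ S ∧ F S ≤ g u) :
    ∃ T : Finset V, T ⊆ B ∧ s ⊆ T ∧ F T ≤ ∑ u ∈ s, g u := by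
  induction s using Finset.induction_on with
  | empty => exact ⟨∅, by simp, by simp, by simp [h0]⟩
  | insert a s ha ih =>
    obtain ⟨T, hTB, hsT, hle⟩ := ih fun u hu => hg u (Finset.mem_insert_of_mem hu)
    obtain ⟨S, hSB, haS, hS⟩ := hg a (Finset.mem_insert_self a s)
    refine ⟨S ∪ T, Finset.union_subset hSB hTB, ?_, ?_⟩
    · exact Finset.insert_subset (Finset.mem_union_left _ haS)
        (hsT.trans Finset.subset_union_right)
    · rw [Finset.sum_insert ha]
      linarith [hF S T, hn (S ∩ T)]

/-- The upper bound for one function, on a subset `B` of its support `W`. -/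
lemma le_sum_minCut {V : Type*} [DecidableEq V] {F : Finset V → ℝ} (hF : Submodular F)
    (hn : ∀ A, 0 ≤ F A) (h0 : F ∅ = 0) {W : Finset V} (hW : F W = 0) (m : V → V → ℝ)
    (hm : ∀ u v : V, u ≠ v → u ∈ W → v ∈ W →
      IsLeast {x : ℝ | ∃ A : Finset V, A ⊆ W ∧ u ∈ A ∧ v ∉ A ∧ F A = x} (m u v))
    {B : Finset V} (hB : B ⊆ W) : F B ≤ ∑ u ∈ B, ∑ v ∈ W \ B, m u v := by
  obtain ⟨T, hTB, hBT, hle⟩ := exists_union_le hF hn h0 (B := B)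
    (fun u => ∑ v ∈ W \ B, m u v) B (by
      intro u hu
      obtain ⟨S, hSW, huS, hS, hle⟩ := exists_inter_le hF hn hW (hB hu) (m u) (W \ B) (by
        intro v hv
        rw [Finset.mem_sdiff] at hv
        exact (hm u v (fun h => hv.2 (h ▸ hu)) (hB hu) hv.1).1)
      refine ⟨S, fun x hx => ?_, huS, hle⟩
      by_contra hxB
      exact hS x (Finset.mem_sdiff.2 ⟨hSW hx, hxB⟩) hx)
  rwa [hTB.antisymm hBT] at hle

/-- The lower bound for one function: at most `|W|² / 4 ≤ M² / 4` pairs are separated by `B`, each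
at minimal cost at most `F B`. -/
lemma sum_minCut_le {V : Type*} [DecidableEq V] {F : Finset V → ℝ}
    (hn : ∀ A, 0 ≤ F A) {W : Finset V} (m : V → V → ℝ)
    (hm : ∀ u v : V, u ≠ v → u ∈ W → v ∈ W →
      IsLeast {x : ℝ | ∃ A : Finset V, A ⊆ W ∧ u ∈ A ∧ v ∉ A ∧ F A = x} (m u v))
    {B : Finset V} (hB : B ⊆ W) {M : ℕ} (hM : W.card ≤ M) :
    4 * ∑ u ∈ B, ∑ v ∈ W \ B, m u v ≤ (M : ℝ) ^ 2 * F B := by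
  have h1 : ∑ u ∈ B, ∑ v ∈ W \ B, m u v ≤ ∑ u ∈ B, ∑ v ∈ W \ B, F B := by
    refine Finset.sum_le_sum fun u hu => Finset.sum_le_sum fun v hv => ?_
    rw [Finset.mem_sdiff] at hv
    exact (hm u v (fun h => hv.2 (h ▸ hu)) (hB hu) hv.1).2 ⟨B, hB, hu, hv.2, rfl⟩
  simp only [Finset.sum_const, nsmul_eq_mul] at h1
  have h2 : ((W \ B).card : ℝ) + B.card ≤ M := by
    exact_mod_cast (Finset.card_sdiff_add_card_eq_card hB).le.trans hM
  have h3 : 4 * ((B.card : ℝ) * (W \ B).card) ≤ (M : ℝ) ^ 2 := by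
    have hb : (0 : ℝ) ≤ (W \ B).card + B.card := by positivity
    nlinarith [sq_nonneg ((B.card : ℝ) - (W \ B).card), pow_le_pow_left₀ hb h2 2]
  nlinarith [mul_le_mul_of_nonneg_right h3 (hn B)]

lemma cutVal_eq_sum {V : Type*} [DecidableEq V] [Fintype V] {r : ℕ} (Vs : Fin r → Finset V)
    (m : Fin r → V → V → ℝ) (c : V → V → ℝ)
    (hc : ∀ u v : V, u ≠ v →
      c u v = ∑ i : Fin r, if u ∈ Vs i ∧ v ∈ Vs i then m i u v else 0) (A : Finset V) :
    cutVal c A = ∑ i, ∑ u ∈ A ∩ Vs i, ∑ v ∈ Vs i \ (A ∩ Vs i), m i u v := by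
  have h1 : cutVal c A = ∑ u ∈ A, ∑ v ∈ Aᶜ, ∑ i : Fin r,
      if u ∈ Vs i ∧ v ∈ Vs i then m i u v else 0 := by
    refine Finset.sum_congr rfl fun u hu => Finset.sum_congr rfl fun v hv => ?_
    exact hc u v fun h => Finset.mem_compl.1 hv (h ▸ hu)
  rw [h1]
  simp_rw [Finset.sum_comm (s := Aᶜ)]
  rw [Finset.sum_comm]
  refine Finset.sum_congr rfl fun i _ => ?_
  have h2 : Vs i \ (A ∩ Vs i) = Aᶜ.filter (· ∈ Vs i) := by
    ext x; simp only [Finset.mem_sdiff, Finset.mem_inter, Finset.mem_filter, Finset.mem_compl]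
    tauto
  rw [h2, ← Finset.filter_mem_eq_inter, Finset.sum_filter]
  refine Finset.sum_congr rfl fun u _ => ?_
  rw [Finset.sum_filter]
  by_cases hu : u ∈ Vs i <;> simp [hu]

/-- Let `F_1, …, F_r` be nonnegative submodular functions, each `V_i`-restricted with
`F_i ∅ = F_i V_i = 0`.  With capacities
`c u v = Σ_{i : u, v ∈ V_i} min { F_i A : A ⊆ V_i, u ∈ A, v ∉ A }` for `u ≠ v`, the cut
function satisfies `(4/M²) c⁺(A) ≤ Σ_i F_i(A) ≤ c⁺(A)` where `M = max_i |V_i|`. -/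
theorem stmt2 {V : Type*} [DecidableEq V] [Fintype V]
    (r : ℕ) (Vs : Fin r → Finset V)
    (F : Fin r → Finset V → ℝ)
    (hsub : ∀ i, Submodular (F i))
    (hnonneg : ∀ i (A : Finset V), 0 ≤ F i A)
    (hres : ∀ i (A : Finset V), F i A = F i (A ∩ Vs i))
    (h0 : ∀ i, F i ∅ = 0) (hVi : ∀ i, F i (Vs i) = 0)
    (m : Fin r → V → V → ℝ)
    (hm : ∀ (i : Fin r) (u v : V), u ≠ v → u ∈ Vs i → v ∈ Vs i →
      IsLeast {x : ℝ | ∃ A : Finset V, A ⊆ Vs i ∧ u ∈ A ∧ v ∉ A ∧ F i A = x} (m i u v))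
    (c : V → V → ℝ)
    (hc : ∀ u v : V, u ≠ v →
      c u v = ∑ i : Fin r, if u ∈ Vs i ∧ v ∈ Vs i then m i u v else 0)
    (M : ℕ) (hM : M = Finset.univ.sup fun i => (Vs i).card) :
    ∀ A : Finset V,
      (4 / (M : ℝ) ^ 2) * cutVal c A ≤ ∑ i, F i A ∧ ∑ i, F i A ≤ cutVal c A := by
  intro A
  rw [cutVal_eq_sum Vs m c hc A]
  constructor
  · rcases Nat.eq_zero_or_pos M with h | h
    -- For `M = 0` the factor `4 / M ^ 2` is `0`.
    · simp only [h, Nat.cast_zero, ne_eq, OfNat.ofNat_ne_zero, not_false_eq_true, zero_pow,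
        div_zero, zero_mul]
      exact Finset.sum_nonneg fun i _ => hnonneg i A
    · have hMpos : (0 : ℝ) < (M : ℝ) ^ 2 := by positivity
      rw [div_mul_eq_mul_div, div_le_iff₀ hMpos, Finset.mul_sum, Finset.sum_mul]
      refine Finset.sum_le_sum fun i _ => ?_
      rw [hres i A, mul_comm (F i _)]
      refine sum_minCut_le (hnonneg i) (m i) (hm i) Finset.inter_subset_right ?_
      rw [hM]
      exact Finset.le_sup (f := fun i => (Vs i).card) (Finset.mem_univ i)
  · refine Finset.sum_le_sum fun i _ => ?_
    rw [hres i A]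
    exact le_sum_minCut (hsub i) (hnonneg i) (h0 i) (hVi i) (m i) (hm i)
      Finset.inter_subset_right
end

section
/- Let F : 2^V → ℝ be a submodular set function on a finite set V = {1, …, n} with F(∅) = 0, and let f be its Lovász extension. For each i ∈ V let ψ_i : ℝ → ℝ be strictly convex and differentiable with ψ_i'(α) → −∞ as α → −∞ and ψ_i'(α) → +∞ as α → +∞. Let x* be the unique minimizer over ℝ^n of x ↦ f(x) + Σ_{i ∈ V} ψ_i(x_i). Then for every α ∈ ℝ, the set A^α = { i ∈ V : x*_i ≥ α } is a minimizer over A ⊆ V of A ↦ F(A) + Σ_{i ∈ A} ψ_i'(α). -/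
/-- The submodular base polytope of a set function `F` with `F ∅ = 0`. -/
def basePolytope {V : Type*} [Fintype V] (F : Finset V → ℝ) : Set (V → ℝ) :=
  {w | (∀ A : Finset V, ∑ i ∈ A, w i ≤ F A) ∧ ∑ i, w i = F Finset.univ}

/-- The Lovász extension of `F`: `f x = max_{w ∈ B(F)} ⟨w, x⟩`. -/
noncomputable def lovasz {V : Type*} [Fintype V] (F : Finset V → ℝ) (x : V → ℝ) : ℝ :=
  sSup ((fun w : V → ℝ => ∑ i, w i * x i) '' basePolytope F)

section Helpers

variable {V : Type*} [DecidableEq V] [Fintype V]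

/-! ### Bases and the Lovász extension -/

/-- The greedy algorithm produces a base of the restriction of `F` to `S`: each new element receives
its marginal value, and submodularity preserves all the constraints. -/
lemma exists_greedy (F : Finset V → ℝ) (hF : Submodular F) (hF0 : F ∅ = 0) (S : Finset V) :
    ∃ w : V → ℝ, (∀ A ⊆ S, ∑ i ∈ A, w i ≤ F A) ∧ ∑ i ∈ S, w i = F S := by
  induction S using Finset.induction_on with
  | empty =>
    refine ⟨0, fun A hA => ?_, by simp [hF0]⟩
    rw [Finset.subset_empty.1 hA]; simp [hF0]
  | insert a S ha ih =>
    obtain ⟨w, hw, hwS⟩ := ih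
    have hcongr : ∀ B : Finset V, a ∉ B →
        ∑ i ∈ B, Function.update w a (F (insert a S) - F S) i = ∑ i ∈ B, w i := by
      intro B hB
      refine Finset.sum_congr rfl fun i hi => ?_
      rw [Function.update_of_ne]
      rintro rfl; exact hB hi
    refine ⟨Function.update w a (F (insert a S) - F S), fun A hA => ?_, ?_⟩
    · by_cases haA : a ∈ A
      · rw [← Finset.add_sum_erase A _ haA, hcongr _ (Finset.notMem_erase a A),
          Function.update_self]
        have h1 := hw (A.erase a) (by
          intro i hi
          have := hA (Finset.mem_of_mem_erase hi)
          exact (Finset.mem_insert.1 this).resolve_left (Finset.ne_of_mem_erase hi))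
        have h2 := hF A S
        have e1 : A ∪ S = insert a S := by
          ext i; have := @hA i; simp only [Finset.mem_union, Finset.mem_insert] at *
          constructor
          · rintro (h | h)
            · exact this h
            · exact Or.inr h
          · rintro (h | h)
            · exact Or.inl (h ▸ haA)
            · exact Or.inr h
        have e2 : A ∩ S = A.erase a := by
          ext i; have := @hA i; simp only [Finset.mem_inter, Finset.mem_insert,
            Finset.mem_erase] at *
          constructor
          · rintro ⟨h, h'⟩
            exact ⟨fun e => ha (e ▸ h'), h⟩
          · rintro ⟨h, h'⟩
            exact ⟨h', (this h').resolve_left h⟩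
        rw [e1, e2] at h2
        linarith
      · rw [hcongr A haA]
        refine hw A fun i hi => ?_
        exact (Finset.mem_insert.1 (hA hi)).resolve_left (fun e => haA (e ▸ hi))
    · rw [Finset.sum_insert ha, hcongr S ha, Function.update_self, hwS]; ring

lemma basePolytope_nonempty (F : Finset V → ℝ) (hF : Submodular F) (hF0 : F ∅ = 0) :
    (basePolytope F).Nonempty := by
  obtain ⟨w, hw, hwV⟩ := exists_greedy F hF hF0 Finset.univ
  exact ⟨w, fun A => hw A (Finset.subset_univ A), hwV⟩

/-- Coordinates of a base satisfy `F V - F (V \ {i}) ≤ w i ≤ F {i}`, so linear functionals are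
bounded on the base polytope. -/
lemma bddAbove_image (F : Finset V → ℝ) (x : V → ℝ) :
    BddAbove ((fun w : V → ℝ => ∑ i, w i * x i) '' basePolytope F) := by
  refine ⟨∑ i, max (F {i} * x i) ((F Finset.univ - F (Finset.univ.erase i)) * x i), ?_⟩
  rintro _ ⟨w, ⟨hw, hwV⟩, rfl⟩
  refine Finset.sum_le_sum fun i _ => ?_
  have h1 : w i ≤ F {i} := by simpa using hw {i}
  have h2 := hw (Finset.univ.erase i)
  have h3 := Finset.add_sum_erase Finset.univ w (Finset.mem_univ i)
  rcases le_total 0 (x i) with h | h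
  · exact le_max_of_le_left (mul_le_mul_of_nonneg_right h1 h)
  · exact le_max_of_le_right (mul_le_mul_of_nonpos_right (by linarith) h)

lemma le_lovasz (F : Finset V → ℝ) (x : V → ℝ) {w : V → ℝ} (hw : w ∈ basePolytope F) :
    ∑ i, w i * x i ≤ lovasz F x :=
  le_csSup (bddAbove_image F x) ⟨w, hw, rfl⟩

lemma lovasz_le (F : Finset V → ℝ) (hF : Submodular F) (hF0 : F ∅ = 0) (x : V → ℝ) (c : ℝ)
    (h : ∀ w ∈ basePolytope F, ∑ i, w i * x i ≤ c) : lovasz F x ≤ c := by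
  refine csSup_le ((basePolytope_nonempty F hF hF0).image _) ?_
  rintro _ ⟨w, hw, rfl⟩
  exact h w hw

lemma lovasz_smul_le (F : Finset V → ℝ) (hF : Submodular F) (hF0 : F ∅ = 0) (x : V → ℝ)
    {c : ℝ} (hc : 0 ≤ c) : lovasz F (fun i => c * x i) ≤ c * lovasz F x := by
  refine lovasz_le F hF hF0 _ _ fun w hw => ?_
  have := mul_le_mul_of_nonneg_left (le_lovasz F x hw) hc
  rw [Finset.mul_sum] at this
  refine le_trans (le_of_eq (Finset.sum_congr rfl fun i _ => ?_)) this
  ring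

lemma lovasz_segment_le (F : Finset V → ℝ) (hF : Submodular F) (hF0 : F ∅ = 0) (x y : V → ℝ)
    {t : ℝ} (h0 : 0 ≤ t) (h1 : t ≤ 1) :
    lovasz F (fun i => x i + t * (y i - x i)) ≤ (1 - t) * lovasz F x + t * lovasz F y := by
  refine lovasz_le F hF hF0 _ _ fun w hw => ?_
  have hx := mul_le_mul_of_nonneg_left (le_lovasz F x hw) (sub_nonneg.2 h1)
  have hy := mul_le_mul_of_nonneg_left (le_lovasz F y hw) h0
  rw [Finset.mul_sum] at hx hy
  refine le_trans (le_of_eq ?_) (add_le_add hx hy)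
  rw [← Finset.sum_add_distrib]
  exact Finset.sum_congr rfl fun i _ => by ring

/-! ### First-order optimality -/

/-- First-order optimality: `-∇ψ(x)` is a subgradient of the Lovász extension at a minimizer. -/
lemma subgradient (F : Finset V → ℝ) (hF : Submodular F) (hF0 : F ∅ = 0)
    (ψ ψ' : V → ℝ → ℝ) (hderiv : ∀ i x, HasDerivAt (ψ i) (ψ' i x) x) (x : V → ℝ)
    (hmin : ∀ y : V → ℝ, lovasz F x + ∑ i, ψ i (x i) ≤ lovasz F y + ∑ i, ψ i (y i))
    (y : V → ℝ) :
    lovasz F x + ∑ i, (-ψ' i (x i)) * (y i - x i) ≤ lovasz F y := by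
  have hd : HasDerivAt
      (fun t : ℝ => t * (lovasz F y - lovasz F x) + ∑ i, ψ i (x i + t * (y i - x i)))
      (1 * (lovasz F y - lovasz F x) + ∑ i, ψ' i (x i) * (1 * (y i - x i))) 0 := by
    refine ((hasDerivAt_id (0 : ℝ)).mul_const _).add (HasDerivAt.fun_sum fun i _ => ?_)
    have h1 : HasDerivAt (fun t : ℝ => x i + t * (y i - x i)) (1 * (y i - x i)) 0 :=
      ((hasDerivAt_id (0 : ℝ)).mul_const _).const_add _
    have h2 : HasDerivAt (ψ i) (ψ' i (x i)) (x i + 0 * (y i - x i)) := by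
      simpa using hderiv i (x i)
    exact h2.comp (0 : ℝ) h1
  have hnn := ge_of_tendsto hd.tendsto_slope_zero_right (b := 0) (by
    filter_upwards [Ioo_mem_nhdsGT (zero_lt_one (α := ℝ))] with t ht
    refine smul_nonneg (inv_nonneg.2 ht.1.le) ?_
    have h1 := hmin (fun i => x i + t * (y i - x i))
    have h2 := lovasz_segment_le F hF hF0 x y ht.1.le ht.2.le
    simp only [zero_add, zero_mul, add_zero]
    linarith)
  have e : ∑ i, (-ψ' i (x i)) * (y i - x i) = -∑ i, ψ' i (x i) * (1 * (y i - x i)) := by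
    rw [← Finset.sum_neg_distrib]
    exact Finset.sum_congr rfl fun i _ => by ring
  rw [e]; linarith

/-- A subgradient of the Lovász extension at `x` is a base maximizing `⟨·, x⟩`. -/
lemma subgradient_mem_and_max (F : Finset V → ℝ) (hF : Submodular F) (hF0 : F ∅ = 0)
    (x s : V → ℝ)
    (hs : ∀ y : V → ℝ, lovasz F x + ∑ i, s i * (y i - x i) ≤ lovasz F y) :
    s ∈ basePolytope F ∧ ∀ w ∈ basePolytope F, ∑ i, w i * x i ≤ ∑ i, s i * x i := by
  have hsub : ∀ y : V → ℝ, ∑ i, s i * (y i - x i) = ∑ i, s i * y i - ∑ i, s i * x i := by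
    intro y
    rw [← Finset.sum_sub_distrib]
    exact Finset.sum_congr rfl fun i _ => by ring
  have hle : lovasz F x ≤ ∑ i, s i * x i := by
    have h := hs (fun i => 0 * x i)
    have h' := lovasz_smul_le F hF hF0 x le_rfl
    rw [hsub] at h
    simp only [zero_mul, mul_zero, Finset.sum_const_zero] at h h'
    linarith
  have hge : ∑ i, s i * x i ≤ lovasz F x := by
    have h := hs (fun i => 2 * x i)
    have h' := lovasz_smul_le F hF hF0 x zero_le_two
    have e : ∑ i, s i * (2 * x i - x i) = ∑ i, s i * x i :=
      Finset.sum_congr rfl fun i _ => by ring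
    rw [e] at h
    linarith
  have hall : ∀ y : V → ℝ, ∑ i, s i * y i ≤ lovasz F y := by
    intro y
    have h := hs y
    rw [hsub] at h
    linarith
  have hA : ∀ A : Finset V, ∑ i ∈ A, s i ≤ F A := by
    intro A
    have h := hall (fun i => if i ∈ A then 1 else 0)
    have h' : lovasz F (fun i => if i ∈ A then 1 else 0) ≤ F A :=
      lovasz_le F hF hF0 _ _ fun w hw => by simpa using hw.1 A
    simp only [mul_ite, mul_one, mul_zero, Finset.sum_ite_mem, Finset.univ_inter] at h
    linarith
  refine ⟨⟨hA, le_antisymm (hA _) ?_⟩, fun w hw => (le_lovasz F x hw).trans hle⟩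
  have h := hall (fun _ => -1)
  have h' : lovasz F (fun _ => -1) ≤ -F Finset.univ :=
    lovasz_le F hF hF0 _ _ fun w hw => by simp [hw.2]
  simp only [mul_neg, mul_one, Finset.sum_neg_distrib] at h
  linarith

/-! ### Tight sets -/

/-- If every set containing `i` but not `j` had slack, a small amount of mass could be moved from
`j` to `i`, which would increase `⟨s, x⟩`. -/
lemma exists_tight_separating (F : Finset V → ℝ) (x s : V → ℝ) (hs : s ∈ basePolytope F)
    (hmax : ∀ w ∈ basePolytope F, ∑ i, w i * x i ≤ ∑ i, s i * x i)
    {i j : V} (hij : x j < x i) :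
    ∃ A : Finset V, i ∈ A ∧ j ∉ A ∧ ∑ k ∈ A, s k = F A := by
  by_contra! hcon
  have hev : ∀ᶠ ε : ℝ in nhdsWithin 0 (Set.Ioi 0),
      ∀ A : Finset V, i ∈ A → j ∉ A → ∑ k ∈ A, s k + ε ≤ F A := by
    rw [Filter.eventually_all]
    intro A
    by_cases hA : i ∈ A ∧ j ∉ A
    · have hlt : 0 < F A - ∑ k ∈ A, s k :=
        sub_pos.2 (lt_of_le_of_ne (hs.1 A) (hcon A hA.1 hA.2))
      filter_upwards [Ioo_mem_nhdsGT hlt] with ε hε _ _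
      linarith [hε.2]
    · exact Filter.Eventually.of_forall fun ε h1 h2 => absurd ⟨h1, h2⟩ hA
  obtain ⟨ε, hε, hpos⟩ := (hev.and self_mem_nhdsWithin).exists
  have hpos : 0 < ε := hpos
  have hsum : ∀ A : Finset V,
      ∑ k ∈ A, (s k + ((if k = i then ε else 0) - (if k = j then ε else 0)))
        = ∑ k ∈ A, s k + ((if i ∈ A then ε else 0) - (if j ∈ A then ε else 0)) := by
    intro A
    rw [Finset.sum_add_distrib, Finset.sum_sub_distrib, Finset.sum_ite_eq', Finset.sum_ite_eq']
  have hw := hmax (fun k => s k + ((if k = i then ε else 0) - (if k = j then ε else 0))) (by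
    refine ⟨fun A => ?_, ?_⟩
    · rw [hsum]
      have h1 := hs.1 A
      have h2 := hε A
      by_cases hi : i ∈ A <;> by_cases hj : j ∈ A <;> simp only [hi, hj, if_true, if_false]
      · linarith
      · linarith [h2 hi hj]
      · linarith
      · linarith
    · rw [hsum]
      simp [hs.2])
  simp only [add_mul, sub_mul, ite_mul, zero_mul, Finset.sum_add_distrib,
    Finset.sum_sub_distrib, Finset.sum_ite_eq', Finset.mem_univ, if_true] at hw
  nlinarith [mul_pos hpos (sub_pos.2 hij)]

lemma tight_union_inter (F : Finset V → ℝ) (hF : Submodular F) (s : V → ℝ)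
    (hs : s ∈ basePolytope F) {A B : Finset V} (hA : ∑ k ∈ A, s k = F A)
    (hB : ∑ k ∈ B, s k = F B) :
    ∑ k ∈ A ∪ B, s k = F (A ∪ B) ∧ ∑ k ∈ A ∩ B, s k = F (A ∩ B) := by
  have h1 := hs.1 (A ∪ B)
  have h2 := hs.1 (A ∩ B)
  have h3 := hF A B
  have h4 := Finset.sum_union_inter (s₁ := A) (s₂ := B) (f := s)
  constructor <;> linarith

/-- If all values of `x` on `A` exceed those off `A`, then `A = ⋃_{i ∈ A} ⋂_{j ∉ A} D i j` with
`D i j` tight sets separating `i` from `j`; hence `A` is tight. -/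
lemma superlevel_tight (F : Finset V → ℝ) (hF : Submodular F) (hF0 : F ∅ = 0) (x s : V → ℝ)
    (hs : s ∈ basePolytope F)
    (hmax : ∀ w ∈ basePolytope F, ∑ i, w i * x i ≤ ∑ i, s i * x i)
    (A : Finset V) (hA : ∀ i ∈ A, ∀ j ∉ A, x j < x i) : ∑ k ∈ A, s k = F A := by
  have hinter : ∀ i ∈ A, ∀ T : Finset V, (∀ j ∈ T, j ∉ A) →
      ∃ D : Finset V, i ∈ D ∧ (∀ j ∈ T, j ∉ D) ∧ ∑ k ∈ D, s k = F D := by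
    intro i hi T
    induction T using Finset.induction_on with
    | empty => exact fun _ => ⟨Finset.univ, by simp, by simp, hs.2⟩
    | insert a T _ ih =>
      intro hT
      obtain ⟨D, hiD, hD, hDt⟩ := ih fun j hj => hT j (Finset.mem_insert_of_mem hj)
      obtain ⟨E, hiE, haE, hEt⟩ := exists_tight_separating F x s hs hmax
        (hA i hi a (hT a (Finset.mem_insert_self a T)))
      refine ⟨D ∩ E, Finset.mem_inter.2 ⟨hiD, hiE⟩, fun j hj hjDE => ?_,
        (tight_union_inter F hF s hs hDt hEt).2⟩
      rw [Finset.mem_inter] at hjDE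
      rcases Finset.mem_insert.1 hj with rfl | hj
      · exact haE hjDE.2
      · exact hD j hj hjDE.1
  have hunion : ∀ T ⊆ A, ∃ D : Finset V, T ⊆ D ∧ D ⊆ A ∧ ∑ k ∈ D, s k = F D := by
    intro T
    induction T using Finset.induction_on with
    | empty => exact fun _ => ⟨∅, by simp, by simp, by simp [hF0]⟩
    | insert a T _ ih =>
      intro hT
      obtain ⟨D, hTD, hDA, hDt⟩ := ih fun j hj => hT (Finset.mem_insert_of_mem hj)
      obtain ⟨E, haE, hE, hEt⟩ := hinter a (hT (Finset.mem_insert_self a T)) Aᶜ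
        fun j hj => Finset.mem_compl.1 hj
      refine ⟨D ∪ E, ?_, Finset.union_subset hDA fun k hk => ?_,
        (tight_union_inter F hF s hs hDt hEt).1⟩
      · exact Finset.insert_subset (Finset.mem_union_right _ haE)
          (hTD.trans Finset.subset_union_left)
      · by_contra hkA
        exact hE k (Finset.mem_compl.2 hkA) hk
  obtain ⟨D, hAD, hDA, hDt⟩ := hunion A subset_rfl
  rwa [Finset.Subset.antisymm hDA hAD] at hDt

end Helpers

/-- Let `F` be submodular with `F ∅ = 0` and `f` its Lovász extension, and let each
`ψ_i` be strictly convex and differentiable with `ψ_i' → ∓∞` at `∓∞`. If `x*` is the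
unique minimizer of `x ↦ f x + Σ_i ψ_i (x i)`, then for every `α`, the set
`A^α = { i : x*_i ≥ α }` minimizes `A ↦ F A + Σ_{i ∈ A} ψ_i'(α)`. -/
theorem stmt5 {V : Type*} [DecidableEq V] [Fintype V]
    (F : Finset V → ℝ) (hF : Submodular F) (hF0 : F ∅ = 0)
    (ψ ψ' : V → ℝ → ℝ)
    (hconv : ∀ i, StrictConvexOn ℝ Set.univ (ψ i))
    (hderiv : ∀ i x, HasDerivAt (ψ i) (ψ' i x) x)
    (hbot : ∀ i, Filter.Tendsto (ψ' i) Filter.atBot Filter.atBot)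
    (htop : ∀ i, Filter.Tendsto (ψ' i) Filter.atTop Filter.atTop)
    (xstar : V → ℝ)
    (hmin : ∀ x : V → ℝ,
      lovasz F xstar + ∑ i, ψ i (xstar i) ≤ lovasz F x + ∑ i, ψ i (x i))
    (huniq : ∀ y : V → ℝ,
      (∀ x : V → ℝ, lovasz F y + ∑ i, ψ i (y i) ≤ lovasz F x + ∑ i, ψ i (x i)) →
      y = xstar) :
    ∀ (α : ℝ) (Aα : Finset V), (∀ i : V, i ∈ Aα ↔ α ≤ xstar i) →
      ∀ A : Finset V, F Aα + ∑ i ∈ Aα, ψ' i α ≤ F A + ∑ i ∈ A, ψ' i α := by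
  intro α Aα hAα A
  have hmono : ∀ i, Monotone (ψ' i) := by
    intro i
    have h := (hconv i).convexOn.monotoneOn_deriv fun x _ => (hderiv i x).differentiableAt
    have e : deriv (ψ i) = ψ' i := funext fun x => (hderiv i x).deriv
    rw [e] at h
    exact monotoneOn_univ.1 h
  obtain ⟨hs, hmax⟩ := subgradient_mem_and_max F hF hF0 xstar (fun i => -ψ' i (xstar i))
    (subgradient F hF hF0 ψ ψ' hderiv xstar hmin)
  have htight := superlevel_tight F hF hF0 xstar _ hs hmax Aα fun i hi j hj =>
    lt_of_lt_of_le (not_le.1 fun h => hj ((hAα j).2 h)) ((hAα i).1 hi)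
  have hle := hs.1 A
  rw [← htight]
  refine le_trans ?_ (add_le_add_left hle _)
  rw [← Finset.sum_add_distrib, ← Finset.sum_add_distrib,
    ← Finset.sum_inter_add_sum_sdiff Aα A, ← Finset.sum_inter_add_sum_sdiff A Aα,
    Finset.inter_comm A Aα]
  -- The summands are nonpositive on `Aα` and nonnegative off it.
  have h1 : ∑ i ∈ Aα \ A, (-ψ' i (xstar i) + ψ' i α) ≤ 0 :=
    Finset.sum_nonpos fun i hi => by
      linarith [hmono i ((hAα i).1 (Finset.mem_sdiff.1 hi).1)]
  have h2 : 0 ≤ ∑ i ∈ A \ Aα, (-ψ' i (xstar i) + ψ' i α) :=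
    Finset.sum_nonneg fun i hi => by
      have h : xstar i ≤ α :=
        (not_le.1 fun h => (Finset.mem_sdiff.1 hi).2 ((hAα i).2 h)).le
      linarith [hmono i h]
  linarith
end

section
/- Let F : 2^V → ℝ be a submodular set function on a finite set V, and for each i ∈ V let ψ_i : ℝ → ℝ be strictly convex and differentiable. Let α > β be real numbers, let A^α be a minimizer over A ⊆ V of A ↦ F(A) + Σ_{i ∈ A} ψ_i'(α), and let A^β be a minimizer over A ⊆ V of A ↦ F(A) + Σ_{i ∈ A} ψ_i'(β). Then A^α ⊆ A^β. -/
/-- Let `F` be submodular and each `ψ_i` strictly convex and differentiable.  If `α > β`,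
`A^α` minimizes `A ↦ F A + Σ_{i ∈ A} ψ_i'(α)` and `A^β` minimizes
`A ↦ F A + Σ_{i ∈ A} ψ_i'(β)`, then `A^α ⊆ A^β`. -/
theorem stmt6 {V : Type*} [DecidableEq V] [Fintype V]
    (F : Finset V → ℝ) (hF : Submodular F)
    (ψ ψ' : V → ℝ → ℝ)
    (hconv : ∀ i, StrictConvexOn ℝ Set.univ (ψ i))
    (hderiv : ∀ i x, HasDerivAt (ψ i) (ψ' i x) x)
    (α β : ℝ) (hαβ : β < α)
    (Aα Aβ : Finset V)
    (hAα : ∀ A : Finset V, F Aα + ∑ i ∈ Aα, ψ' i α ≤ F A + ∑ i ∈ A, ψ' i α)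
    (hAβ : ∀ A : Finset V, F Aβ + ∑ i ∈ Aβ, ψ' i β ≤ F A + ∑ i ∈ A, ψ' i β) :
    Aα ⊆ Aβ := by
  have hlt : ∀ i, ψ' i β < ψ' i α := fun i => by
    have h := (hconv i).strictMonoOn_deriv (fun x _ => (hderiv i x).differentiableAt)
      (Set.mem_univ β) (Set.mem_univ α) hαβ
    rwa [(hderiv i β).deriv, (hderiv i α).deriv] at h
  by_contra hsub
  have hne : (Aα \ Aβ).Nonempty := Finset.sdiff_nonempty.mpr hsub
  have hsum : ∑ i ∈ Aα \ Aβ, ψ' i β < ∑ i ∈ Aα \ Aβ, ψ' i α :=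
    Finset.sum_lt_sum_of_nonempty hne fun i _ => hlt i
  have hinter : ∑ i ∈ Aα ∩ Aβ, ψ' i α + ∑ i ∈ Aα \ Aβ, ψ' i α = ∑ i ∈ Aα, ψ' i α :=
    Finset.sum_inter_add_sum_sdiff Aα Aβ _
  have hunion : ∑ i ∈ Aα ∪ Aβ, ψ' i β = ∑ i ∈ Aα \ Aβ, ψ' i β + ∑ i ∈ Aβ, ψ' i β := by
    rw [← Finset.sdiff_union_self_eq_union, Finset.sum_union Finset.sdiff_disjoint]
  -- Submodularity and the two minimalities bound the sum at `α` by the sum at `β`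
  -- over `Aα \ Aβ`, contradicting `hsum`.
  linarith [hF Aα Aβ, hAα (Aα ∩ Aβ), hAβ (Aα ∪ Aβ)]
end

section
/- Let F : 2^V → ℝ be a submodular set function on V = {1, …, n} with F(∅) = 0. For each i ∈ V let ψ_i : ℝ → ℝ be twice differentiable with σ ≤ ψ_i''(x) ≤ L for all x, where 0 < σ ≤ L, and let ψ_i* be its Fenchel conjugate (which is differentiable, with (ψ_i*)' being 1/σ-Lipschitz, since ψ_i is σ-strongly convex). Let w* be a minimizer over B(F) of w ↦ Σ_{i ∈ V} ψ_i*(−w_i), and let w ∈ B(F) satisfy Σ_{i ∈ V} ψ_i*(−w_i) ≤ Σ_{i ∈ V} ψ_i*(−w*_i) + ε for some ε ≥ 0. Define x, x* ∈ ℝ^n by x_i = (ψ_i*)'(−w_i) and x*_i = (ψ_i*)'(−w*_i). Then ‖x − x*‖₂ ≤ √(2 L ε / σ²). -/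
/-- The Fenchel conjugate of `g : ℝ → ℝ`: `g* z = sup_x (z x − g x)`. -/
noncomputable def fenchel (g : ℝ → ℝ) (z : ℝ) : ℝ :=
  sSup (Set.range fun x : ℝ => z * x - g x)

section OneDim

variable {f f' f'' : ℝ → ℝ} {σ : ℝ}

theorem monotone_deriv_sub_linear (h2 : ∀ x, HasDerivAt f' (f'' x) x) (hs : ∀ x, σ ≤ f'' x) :
    Monotone fun x => f' x - σ * x := by
  have hd : ∀ x, HasDerivAt (fun x => f' x - σ * x) (f'' x - σ) x := fun x => by
    simpa using (h2 x).fun_sub ((hasDerivAt_id x).const_mul σ)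
  refine monotone_of_deriv_nonneg (fun x => (hd x).differentiableAt) fun x => ?_
  rw [(hd x).deriv]
  linarith [hs x]

/-- The quadratic lower bound at `q` given by strong convexity. -/
theorem strong_tangent (h1 : ∀ x, HasDerivAt f (f' x) x) (h2 : ∀ x, HasDerivAt f' (f'' x) x)
    (hs : ∀ x, σ ≤ f'' x) (p q : ℝ) :
    f q + f' q * (p - q) + σ / 2 * (p - q) ^ 2 ≤ f p := by
  have hm := monotone_deriv_sub_linear h2 hs
  have hd : ∀ x, HasDerivAt (fun x => f x - σ / 2 * x ^ 2) (f' x - σ * x) x := fun x => by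
    have := (h1 x).fun_sub ((hasDerivAt_pow 2 x).const_mul (σ / 2))
    exact this.congr_deriv (by push_cast; ring)
  have hc : ConvexOn ℝ Set.univ (fun x => f x - σ / 2 * x ^ 2) := by
    refine Monotone.convexOn_univ_of_deriv (fun x => (hd x).differentiableAt) ?_
    rwa [show deriv (fun x => f x - σ / 2 * x ^ 2) = fun x => f' x - σ * x from
      funext fun x => (hd x).deriv]
  rcases lt_trichotomy p q with h | h | h
  · have := hc.slope_le_of_hasDerivAt (Set.mem_univ p) (Set.mem_univ q) h (hd q)
    rw [slope_def_field, div_le_iff₀ (by linarith)] at this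
    nlinarith
  · subst h; simp
  · have := hc.le_slope_of_hasDerivAt (Set.mem_univ q) (Set.mem_univ p) h (hd q)
    rw [slope_def_field, le_div_iff₀ (by linarith)] at this
    nlinarith

theorem exists_deriv_eq (hσ : 0 < σ) (h2 : ∀ x, HasDerivAt f' (f'' x) x)
    (hs : ∀ x, σ ≤ f'' x) (z : ℝ) : ∃ p, f' p = z := by
  have hm := monotone_deriv_sub_linear h2 hs
  have hcont : Continuous f' := continuous_iff_continuousAt.2 fun x => (h2 x).continuousAt
  -- The line of slope `σ` through `(0, f' 0)` takes the value `z` at `x₀`.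
  set x₀ := (z - f' 0) / σ with hx₀
  have hx : σ * x₀ = z - f' 0 := by rw [hx₀]; field_simp
  rcases le_total 0 x₀ with h | h
  · have h3 := hm h
    have h4 : 0 ≤ σ * x₀ := by positivity
    simp only at h3
    exact mem_range_of_exists_le_of_exists_ge hcont ⟨0, by linarith⟩ ⟨x₀, by linarith⟩
  · have h3 := hm h
    have h4 : σ * x₀ ≤ 0 := mul_nonpos_of_nonneg_of_nonpos hσ.le h
    simp only at h3
    exact mem_range_of_exists_le_of_exists_ge hcont ⟨x₀, by linarith⟩ ⟨0, by linarith⟩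

/-- The supremum defining `fenchel f (f' p)` is attained at `p`. -/
theorem isGreatest_fenchel (hσ : 0 < σ) (h1 : ∀ x, HasDerivAt f (f' x) x)
    (h2 : ∀ x, HasDerivAt f' (f'' x) x) (hs : ∀ x, σ ≤ f'' x) (p : ℝ) :
    IsGreatest (Set.range fun x : ℝ => f' p * x - f x) (f' p * p - f p) := by
  refine ⟨⟨p, rfl⟩, ?_⟩
  rintro _ ⟨x, rfl⟩
  have h3 := strong_tangent h1 h2 hs x p
  have h4 : 0 ≤ σ / 2 * (x - p) ^ 2 := by positivity
  simp only
  linarith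

/-- The derivative of the conjugate at `z` is the maximiser: it is the point where `f'` equals
`z`, and it attains the supremum defining `fenchel f z`. -/
theorem fenchel_deriv_spec (hσ : 0 < σ) (h1 : ∀ x, HasDerivAt f (f' x) x)
    (h2 : ∀ x, HasDerivAt f' (f'' x) x) (hs : ∀ x, σ ≤ f'' x) {z p : ℝ}
    (hp : HasDerivAt (fenchel f) p z) : f' p = z ∧ fenchel f z = z * p - f p := by
  obtain ⟨q, rfl⟩ := exists_deriv_eq hσ h2 hs z
  have hq := (isGreatest_fenchel hσ h1 h2 hs q).csSup_eq
  have hsub : ∀ y, y * q - f q ≤ fenchel f y := fun y => by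
    obtain ⟨r, rfl⟩ := exists_deriv_eq hσ h2 hs y
    exact le_csSup (isGreatest_fenchel hσ h1 h2 hs r).isLUB.bddAbove ⟨q, rfl⟩
  -- `fenchel f y - y q` is minimal at `y = f' q`, so its derivative `p - q` vanishes there.
  have hmin : IsLocalMin (fun y => fenchel f y - y * q) (f' q) :=
    Filter.Eventually.of_forall fun y => by
      have := hsub y
      change sSup _ = _ at hq
      simp only [fenchel] at this ⊢
      linarith
  have hd : HasDerivAt (fun y => fenchel f y - y * q) (p - q) (f' q) := by
    simpa using hp.fun_sub ((hasDerivAt_id (f' q)).mul_const q)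
  have hpq : p = q := by linarith [hmin.hasDerivAt_eq_zero hd]
  subst hpq
  exact ⟨rfl, hq⟩

/-- The Bregman divergence of the conjugate dominates the squared distance of its gradients. -/
theorem fenchel_bregman (hσ : 0 < σ) (h1 : ∀ x, HasDerivAt f (f' x) x)
    (h2 : ∀ x, HasDerivAt f' (f'' x) x) (hs : ∀ x, σ ≤ f'' x) {y z p q : ℝ}
    (hq : HasDerivAt (fenchel f) q y) (hp : HasDerivAt (fenchel f) p z) :
    fenchel f z + (y - z) * p + σ / 2 * (q - p) ^ 2 ≤ fenchel f y := by
  obtain ⟨hq1, hq2⟩ := fenchel_deriv_spec hσ h1 h2 hs hq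
  obtain ⟨hp1, hp2⟩ := fenchel_deriv_spec hσ h1 h2 hs hp
  have h3 := strong_tangent h1 h2 hs p q
  rw [hq1] at h3
  rw [hq2, hp2]
  nlinarith

end OneDim

theorem convex_basePolytope {V : Type*} [Fintype V] (F : Finset V → ℝ) :
    Convex ℝ (basePolytope F) := by
  rintro u ⟨hu, hu1⟩ v ⟨hv, hv1⟩ a b ha hb hab
  have key : ∀ A : Finset V,
      ∑ i ∈ A, (a • u + b • v) i = a * ∑ i ∈ A, u i + b * ∑ i ∈ A, v i := fun A => by
    simp [Finset.sum_add_distrib, Finset.mul_sum]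
  refine ⟨fun A => ?_, ?_⟩
  · rw [key]
    calc _ ≤ a * F A + b * F A :=
          add_le_add (mul_le_mul_of_nonneg_left (hu A) ha) (mul_le_mul_of_nonneg_left (hv A) hb)
      _ = F A := by rw [← add_mul, hab, one_mul]
  · rw [key, hu1, hv1, ← add_mul, hab, one_mul]

/-- First-order optimality of a minimiser of the separable function `v ↦ ∑ i, g i (-v i)` over a
convex set. -/
theorem first_order {V : Type*} [Fintype V] {S : Set (V → ℝ)} (hS : Convex ℝ S)
    {g g' : V → ℝ → ℝ} (hg : ∀ i z, HasDerivAt (g i) (g' i z) z) {u v : V → ℝ}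
    (hu : u ∈ S) (hv : v ∈ S)
    (hmin : ∀ v ∈ S, ∑ i, g i (-(u i)) ≤ ∑ i, g i (-(v i))) :
    0 ≤ ∑ i, (-(v i) - -(u i)) * g' i (-(u i)) := by
  have hd : HasDerivAt (fun t : ℝ => ∑ i, g i (-(u i) + t * (-(v i) - -(u i))))
      (∑ i, (-(v i) - -(u i)) * g' i (-(u i))) 0 := by
    refine HasDerivAt.fun_sum fun i _ => ?_
    have hl : HasDerivAt (fun t : ℝ => -(u i) + t * (-(v i) - -(u i))) (-(v i) - -(u i)) 0 := by
      simpa using ((hasDerivAt_id (0 : ℝ)).mul_const (-(v i) - -(u i))).const_add (-(u i))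
    have hgi : HasDerivAt (g i) (g' i (-(u i))) (-(u i) + 0 * (-(v i) - -(u i))) := by
      simpa using hg i (-(u i))
    rw [mul_comm]
    exact hgi.comp (0 : ℝ) hl
  have ht := hd.hasDerivWithinAt (s := Set.Ioi 0)
  rw [hasDerivWithinAt_iff_tendsto_slope' (by simp)] at ht
  refine ge_of_tendsto ht ?_
  filter_upwards [Ioo_mem_nhdsGT (zero_lt_one (α := ℝ))] with t ht
  rw [slope_def_field]
  refine div_nonneg ?_ (by linarith [ht.1])
  have hmem := hS hu hv (by linarith [ht.2] : 0 ≤ 1 - t) ht.1.le (by ring)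
  have := hmin _ hmem
  have he : ∀ i, -(((1 - t) • u + t • v) i) = -(u i) + t * (-(v i) - -(u i)) := fun i => by
    simp; ring
  simp only [he] at this
  simpa using this

/-- If `w ∈ B(F)` is an `ε`-approximate minimizer of `w ↦ Σ_i ψ_i*(−w_i)` over `B(F)`
(with minimizer `w*`), where each `ψ_i` is twice differentiable with `σ ≤ ψ_i'' ≤ L`,
then the corresponding primal points `x_i = (ψ_i*)'(−w_i)`, `x*_i = (ψ_i*)'(−w*_i)`
satisfy `‖x − x*‖₂ ≤ √(2 L ε / σ²)`. -/
theorem stmt8 {V : Type*} [DecidableEq V] [Fintype V]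
    (n : ℕ) (hn : Fintype.card V = n)
    (F : Finset V → ℝ) (hF : Submodular F) (hF0 : F ∅ = 0)
    (ψ ψ' ψ'' : V → ℝ → ℝ)
    (hd1 : ∀ i x, HasDerivAt (ψ i) (ψ' i x) x)
    (hd2 : ∀ i x, HasDerivAt (ψ' i) (ψ'' i x) x)
    (σ L : ℝ) (hσ : 0 < σ) (hσL : σ ≤ L)
    (hψ'' : ∀ i x, σ ≤ ψ'' i x ∧ ψ'' i x ≤ L)
    (ψs' : V → ℝ → ℝ)
    (hds : ∀ i z, HasDerivAt (fenchel (ψ i)) (ψs' i z) z)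
    (wstar : V → ℝ) (hwstarB : wstar ∈ basePolytope F)
    (hwstarMin : ∀ w ∈ basePolytope F,
      ∑ i, fenchel (ψ i) (-(wstar i)) ≤ ∑ i, fenchel (ψ i) (-(w i)))
    (w : V → ℝ) (hwB : w ∈ basePolytope F)
    (ε : ℝ) (hε : 0 ≤ ε)
    (happrox : ∑ i, fenchel (ψ i) (-(w i)) ≤ ∑ i, fenchel (ψ i) (-(wstar i)) + ε) :
    Real.sqrt (∑ i, (ψs' i (-(w i)) - ψs' i (-(wstar i))) ^ 2) ≤
      Real.sqrt (2 * L * ε / σ ^ 2) := by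
  have hfo := first_order (convex_basePolytope F) hds hwstarB hwB hwstarMin
  have hB := Finset.sum_le_sum fun i (_ : i ∈ Finset.univ) =>
    fenchel_bregman hσ (hd1 i) (hd2 i) (fun x => (hψ'' i x).1) (hds i (-(w i)))
      (hds i (-(wstar i)))
  rw [Finset.sum_add_distrib, Finset.sum_add_distrib, ← Finset.mul_sum] at hB
  apply Real.sqrt_le_sqrt
  set T := ∑ i, (ψs' i (-(w i)) - ψs' i (-(wstar i))) ^ 2
  have hT : σ / 2 * T ≤ ε := by linarith
  rw [le_div_iff₀ (by positivity)]
  calc T * σ ^ 2 = 2 * σ * (σ / 2 * T) := by ring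
    _ ≤ 2 * σ * ε := by gcongr
    _ ≤ 2 * L * ε := by gcongr
end

section
/- Let V be a finite set with distinguished distinct vertices s, t ∈ V, and let c : V × V → ℝ be nonnegative edge capacities. Then there exists a unique minimal minimum s,t-cut: a set S with s ∈ S ⊆ V \ {t} such that c⁺(S) ≤ c⁺(S') for every s,t-cut S', and S ⊆ S' for every s,t-cut S' with c⁺(S') = c⁺(S). -/
/-- The cut value as a sum over all ordered pairs, so that cuts can be compared termwise. -/
lemma cutVal_eq_sum_ite {V : Type*} [Fintype V] [DecidableEq V] (c : V → V → ℝ)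
    (S : Finset V) :
    cutVal c S = ∑ u, ∑ v, if u ∈ S ∧ v ∉ S then c u v else 0 := by
  have h (u : V) : (∑ v, if u ∈ S ∧ v ∉ S then c u v else 0)
      = if u ∈ S then ∑ v ∈ Sᶜ, c u v else 0 := by
    by_cases hu : u ∈ S
    · simp only [hu, true_and, if_true, ← Finset.sum_filter]
      congr 1
      ext v
      simp
    · simp [hu]
  simp only [cutVal, h, Finset.sum_ite_mem, Finset.univ_inter]

lemma cutVal_submodular {V : Type*} [Fintype V] [DecidableEq V] (c : V → V → ℝ)
    (hc : ∀ u v : V, 0 ≤ c u v) (A B : Finset V) :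
    cutVal c (A ∩ B) + cutVal c (A ∪ B) ≤ cutVal c A + cutVal c B := by
  simp only [cutVal_eq_sum_ite, ← Finset.sum_add_distrib]
  refine Finset.sum_le_sum fun u _ => Finset.sum_le_sum fun v _ => ?_
  have h := hc u v
  by_cases h1 : u ∈ A <;> by_cases h2 : u ∈ B <;> by_cases h3 : v ∈ A <;>
    by_cases h4 : v ∈ B <;> simp [h1, h2, h3, h4, h]

/-- On a finite vertex set with source `s`, sink `t` and nonnegative capacities `c`,
there is a unique *minimal minimum s,t-cut*: an `s,t`-cut `S` of minimum capacity that
is contained in every minimum `s,t`-cut. -/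
theorem stmt11 {V : Type*} [DecidableEq V] [Fintype V]
    (s t : V) (hst : s ≠ t)
    (c : V → V → ℝ) (hc : ∀ u v : V, 0 ≤ c u v) :
    ∃! S : Finset V,
      (s ∈ S ∧ t ∉ S) ∧
      (∀ S' : Finset V, s ∈ S' → t ∉ S' → cutVal c S ≤ cutVal c S') ∧
      (∀ S' : Finset V, s ∈ S' → t ∉ S' → cutVal c S' = cutVal c S → S ⊆ S') := by
  obtain ⟨M, hM, hMmin⟩ := Finset.exists_min_image
    (Finset.univ.filter fun S : Finset V => s ∈ S ∧ t ∉ S) (cutVal c)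
    ⟨{s}, by simp [hst.symm]⟩
  simp only [Finset.mem_filter, Finset.mem_univ, true_and] at hM hMmin
  -- Among the minimum cuts, take one of least cardinality.
  obtain ⟨S, hS, hSmin⟩ := Finset.exists_min_image
    (Finset.univ.filter fun S : Finset V => (s ∈ S ∧ t ∉ S) ∧ cutVal c S = cutVal c M)
    Finset.card ⟨M, by simp [hM]⟩
  simp only [Finset.mem_filter, Finset.mem_univ, true_and] at hS hSmin
  obtain ⟨⟨hsS, htS⟩, hval⟩ := hS
  have hle : ∀ S' : Finset V, s ∈ S' → t ∉ S' → cutVal c S ≤ cutVal c S' :=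
    fun S' h1 h2 => hval ▸ hMmin S' ⟨h1, h2⟩
  have hsub : ∀ S' : Finset V, s ∈ S' → t ∉ S' → cutVal c S' = cutVal c S → S ⊆ S' := by
    intro S' h1 h2 h3
    have hsm := cutVal_submodular c hc S S'
    have hU := hle (S ∪ S') (by simp [h1]) (by simp [htS, h2])
    have hI := hle (S ∩ S') (by simp [hsS, h1]) (by simp [h2])
    have hcard := hSmin (S ∩ S') ⟨by simp [hsS, h1, h2], by linarith⟩
    exact Finset.inter_eq_left.mp (Finset.eq_of_subset_of_card_le Finset.inter_subset_left hcard)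
  refine ⟨S, ⟨⟨hsS, htS⟩, hle, hsub⟩, ?_⟩
  rintro T ⟨⟨hsT, htT⟩, hTle, hTsub⟩
  have heq : cutVal c T = cutVal c S := le_antisymm (hTle S hsS htS) (hle T hsT htT)
  exact Finset.Subset.antisymm (hTsub S hsS htS heq.symm) (hsub T hsT htT heq)
end

section
/- Let h : ℝ^n → ℝ be a convex function, let B, P ⊆ ℝ^n, let w ∈ B, and let α ≥ 1 be a real number such that w + (1/α) · P ⊆ B ⊆ w + P, where w + c · P = { w + c p : p ∈ P }. Suppose w* minimizes h over B and w' minimizes h over w + (1/α) · P. Then h(w') − h(w*) ≤ (1 − 1/α) · (h(w) − h(w*)). -/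
/-- Sandwiching progress lemma: let `h : ℝ^n → ℝ` be convex, `w ∈ B`, `α ≥ 1`, and
suppose `w + (1/α)·P ⊆ B ⊆ w + P`.  If `w*` minimizes `h` over `B` and `w'` minimizes
`h` over `w + (1/α)·P`, then `h w' − h w* ≤ (1 − 1/α)(h w − h w*)`. -/
theorem stmt19 (n : ℕ) (h : (Fin n → ℝ) → ℝ)
    (hconv : ConvexOn ℝ Set.univ h)
    (B P : Set (Fin n → ℝ)) (w : Fin n → ℝ) (hwB : w ∈ B)
    (α : ℝ) (hα : 1 ≤ α)
    (hPB : {x : Fin n → ℝ | ∃ p ∈ P, x = w + (1 / α) • p} ⊆ B)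
    (hBP : B ⊆ {x : Fin n → ℝ | ∃ p ∈ P, x = w + p})
    (wstar : Fin n → ℝ) (hws : wstar ∈ B)
    (hwsmin : ∀ z ∈ B, h wstar ≤ h z)
    (w' : Fin n → ℝ)
    (hw' : w' ∈ {x : Fin n → ℝ | ∃ p ∈ P, x = w + (1 / α) • p})
    (hw'min : ∀ z ∈ {x : Fin n → ℝ | ∃ p ∈ P, x = w + (1 / α) • p}, h w' ≤ h z) :
    h w' - h wstar ≤ (1 - 1 / α) * (h w - h wstar) := by
  obtain ⟨p, hp, rfl⟩ := hBP hws
  have h1 : h w' ≤ h (w + (1 / α) • p) := hw'min _ ⟨p, hp, rfl⟩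
  have hle : 1 / α ≤ 1 := by
    rw [div_le_one (by linarith)]
    exact hα
  have hnn : 0 ≤ 1 / α := by positivity
  -- `w + p/α` is the convex combination of `w` and `w* = w + p` with weight `1/α` on `w*`.
  have h2 := hconv.2 (Set.mem_univ w) (Set.mem_univ (w + p))
    (sub_nonneg.2 hle) hnn (sub_add_cancel 1 (1 / α))
  have h3 : (1 - 1 / α) • w + (1 / α) • (w + p) = w + (1 / α) • p := by
    module
  rw [h3, smul_eq_mul, smul_eq_mul] at h2
  linarith
end
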